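/- Let L and N be positive integers, and let P_s, P_n, P_i, N_d, λ be positive real numbers with N_d ≤ N·λ. Set γ_n = L·λ·P_n/P_s, γ_i = N·L·λ·P_i/P_s, γ_m = γ_i + γ_n·N_d², R = N_d/(N·λ), ξ₁ = L·N_d/γ_n, and ξ₂ = L·N_d³/γ_m. Then ∫₀^∞ [R·Q(√(2·t·ξ₂)) + (1−R)·Q(√(2·t·ξ₁))] · (L^L/(L−1)!) · t^{L−1} · e^{−L·t} dt = 1/2 − (1/2)·[R·Ψ₂ + (1−R)·Ψ₁], where Ψ₁ = Σ_{i=0}^{L−1} C(2i, i)·(γ_n/(4·N_d))^i·(N_d/(N_d + γ_n))^{i+1/2} and Ψ₂ = Σ_{i=0}^{L−1} C(2i, i)·(γ_m/(4·N_d³))^i·(N_d³/(N_d³ + γ_m))^{i+1/2}. -/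

import Mathlib

/-- The Gaussian tail function `Q(x) = ∫_x^∞ (1/√(2π)) e^{−u²/2} du`. -/
noncomputable def gaussQ (x : ℝ) : ℝ :=
  ∫ u in Set.Ioi x, (1 / Real.sqrt (2 * Real.pi)) * Real.exp (-u ^ 2 / 2)

/-!
As a function of `t`, `Q(√(2tξ))` is half the survival function of a `Gamma(1/2, ξ)` variable `G`.
Integrating by parts against the survival function `t ↦ P(Poisson(at) < L)` of a `Gamma(L, a)`
variable therefore turns its mean into `1/2 - 1/2 · P(Poisson(aG) < L)`. A Poisson count whose mean
is Gamma distributed is negative binomial, and for shape `1/2` the negative binomial weights are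
the central binomial terms of `Ψ₁` and `Ψ₂`.
-/

section

open MeasureTheory ProbabilityTheory Set Filter Topology Real
open scoped Nat

theorem hasDerivAt_integral_Ioi {E : Type*} [NormedAddCommGroup E] [NormedSpace ℝ E]
    [CompleteSpace E] {f : ℝ → E} {x : ℝ} (hf : Integrable f) (hx : ContinuousAt f x) :
    HasDerivAt (fun y ↦ ∫ u in Ioi y, f u) (-f x) x := by
  have tail_eq : (fun y ↦ ∫ u in Ioi y, f u) = fun y ↦ (∫ u in Ioi 0, f u) - ∫ u in 0..y, f u :=
    funext fun y ↦ eq_sub_of_add_eq'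
      (intervalIntegral.integral_interval_add_Ioi hf.integrableOn hf.integrableOn)
  rw [tail_eq]
  exact (intervalIntegral.integral_hasDerivAt_right hf.intervalIntegrable
    hf.aestronglyMeasurable.stronglyMeasurableAtFilter hx).const_sub _

theorem gaussQ_eq_integral_gaussianPDFReal (x : ℝ) :
    gaussQ x = ∫ u in Ioi x, gaussianPDFReal 0 1 u := by
  simp [gaussQ, gaussianPDFReal]

theorem gaussQ_nonneg (x : ℝ) : 0 ≤ gaussQ x := by
  rw [gaussQ_eq_integral_gaussianPDFReal]
  exact integral_nonneg (gaussianPDFReal_nonneg 0 1)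

theorem gaussQ_le_one (x : ℝ) : gaussQ x ≤ 1 := by
  rw [gaussQ_eq_integral_gaussianPDFReal, ← integral_gaussianPDFReal_eq_one 0 one_ne_zero]
  exact setIntegral_le_integral (integrable_gaussianPDFReal 0 1)
    (.of_forall (gaussianPDFReal_nonneg 0 1))

theorem abs_gaussQ_le_one (x : ℝ) : |gaussQ x| ≤ 1 :=
  (abs_of_nonneg (gaussQ_nonneg x)).trans_le (gaussQ_le_one x)

theorem gaussQ_zero : gaussQ 0 = 1 / 2 := by
  have exponent (u : ℝ) : -u ^ 2 / 2 = -(1 / 2) * u ^ 2 := by ring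
  simp_rw [gaussQ, exponent]
  rw [integral_const_mul, integral_gaussian_Ioi, show π / (1 / 2) = 2 * π by ring]
  field_simp

theorem hasDerivAt_gaussQ (x : ℝ) : HasDerivAt gaussQ (-gaussianPDFReal 0 1 x) x := by
  rw [funext gaussQ_eq_integral_gaussianPDFReal]
  refine hasDerivAt_integral_Ioi (integrable_gaussianPDFReal 0 1) (Continuous.continuousAt ?_)
  rw [gaussianPDFReal_def]
  fun_prop

@[fun_prop]
theorem continuous_gaussQ : Continuous gaussQ :=
  continuous_iff_continuousAt.2 fun x ↦ (hasDerivAt_gaussQ x).continuousAt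

theorem gammaPDFReal_of_nonneg (s r : ℝ) {t : ℝ} (ht : 0 ≤ t) :
    gammaPDFReal s r t = r ^ s / Gamma s * t ^ (s - 1) * exp (-(r * t)) :=
  if_pos ht

theorem gammaPDFReal_natCast {k : ℕ} (hk : k ≠ 0) (r : ℝ) {t : ℝ} (ht : 0 ≤ t) :
    gammaPDFReal k r t = r ^ k / (k - 1)! * t ^ (k - 1) * exp (-(r * t)) := by
  obtain ⟨n, rfl⟩ := Nat.exists_eq_succ_of_ne_zero hk
  rw [gammaPDFReal_of_nonneg _ _ ht]
  simp [Gamma_nat_eq_factorial, ← rpow_natCast]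

theorem setIntegral_Ioi_gammaPDFReal {s r : ℝ} (hs : 0 < s) (hr : 0 < r) :
    ∫ t in Ioi 0, gammaPDFReal s r t = 1 := by
  rw [setIntegral_congr_fun measurableSet_Ioi fun t ht ↦
    (gammaPDFReal_of_nonneg s r (le_of_lt ht)).trans (mul_assoc _ _ _), integral_const_mul,
    integral_rpow_mul_exp_neg_mul_Ioi hs hr, one_div, inv_rpow hr.le]
  have := Gamma_pos_of_pos hs
  field_simp

theorem integrableOn_Ioi_gammaPDFReal {s r : ℝ} (hs : 0 < s) (hr : 0 < r) :
    IntegrableOn (gammaPDFReal s r) (Ioi 0) :=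
  .of_integral_ne_zero (by simp [setIntegral_Ioi_gammaPDFReal hs hr])

theorem hasDerivAt_gaussQ_sqrt {ξ t : ℝ} (hξ : 0 < ξ) (ht : 0 < t) :
    HasDerivAt (fun t ↦ gaussQ (√(2 * t * ξ))) (-(1 / 2 * gammaPDFReal (1 / 2) ξ t)) t := by
  have inner : HasDerivAt (fun t : ℝ ↦ √(2 * t * ξ)) (2 * ξ / (2 * √(2 * t * ξ))) t := by
    simpa using (((hasDerivAt_id t).const_mul 2).mul_const ξ).sqrt (by simpa using ⟨ht.ne', hξ.ne'⟩)
  refine ((hasDerivAt_gaussQ _).comp t inner).congr_deriv ?_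
  have hexp : -(√(2 * t * ξ) - 0) ^ 2 / (2 * 1) = -(ξ * t) := by
    rw [sub_zero, sq_sqrt (by positivity)]
    ring
  rw [gaussianPDFReal, NNReal.coe_one, hexp, gammaPDFReal_of_nonneg _ _ ht.le, Gamma_one_half_eq,
    show (1 / 2 : ℝ) - 1 = -(1 / 2) by norm_num, rpow_neg ht.le, ← sqrt_eq_rpow, ← sqrt_eq_rpow,
    sqrt_mul (by positivity), sqrt_mul zero_le_two, sqrt_one, mul_one, mul_assoc 2 t,
    sqrt_mul zero_le_two, sqrt_mul ht.le]
  field_simp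
  rw [sq_sqrt zero_le_two, sq_sqrt hξ.le, mul_comm]

/-- The probability `P(Poisson(x) < k)`. For `k ≠ 0` and `0 < a`, the function
`t ↦ poissonTail k (a * t)` is the survival function of `Gamma(k, a)`. -/
noncomputable def poissonTail (k : ℕ) (x : ℝ) : ℝ :=
  ∑ i ∈ Finset.range k, exp (-x) * (x ^ i / i !)

theorem poissonTail_zero_right {k : ℕ} (hk : k ≠ 0) : poissonTail k 0 = 1 := by
  obtain ⟨n, rfl⟩ := Nat.exists_eq_succ_of_ne_zero hk
  simp [poissonTail, Finset.sum_range_succ']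

theorem hasDerivAt_poissonTail_succ (n : ℕ) (x : ℝ) :
    HasDerivAt (poissonTail (n + 1)) (-(exp (-x) * (x ^ n / n !))) x := by
  induction n with
  | zero =>
    unfold poissonTail
    simpa using (hasDerivAt_neg x).exp
  | succ n ih =>
    have succ : poissonTail (n + 1 + 1) =
        fun y ↦ poissonTail (n + 1) y + exp (-y) * (y ^ (n + 1) / (n + 1)!) :=
      funext fun y ↦ Finset.sum_range_succ _ _
    rw [succ]
    refine (ih.add ((hasDerivAt_neg x).exp.mul
      ((hasDerivAt_pow (n + 1) x).div_const _))).congr_deriv ?_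
    rw [Nat.factorial_succ, Nat.add_sub_cancel]
    push_cast
    field_simp
    ring

theorem hasDerivAt_poissonTail_const_mul {k : ℕ} (hk : k ≠ 0) (a : ℝ) {t : ℝ} (ht : 0 ≤ t) :
    HasDerivAt (fun t ↦ poissonTail k (a * t)) (-gammaPDFReal k a t) t := by
  rw [gammaPDFReal_natCast hk a ht]
  obtain ⟨n, rfl⟩ := Nat.exists_eq_succ_of_ne_zero hk
  refine ((hasDerivAt_poissonTail_succ n (a * t)).comp t (hasDerivAt_const_mul a)).congr_deriv ?_
  rw [Nat.succ_eq_add_one, Nat.add_sub_cancel]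
  ring

theorem tendsto_poissonTail_atTop (k : ℕ) : Tendsto (poissonTail k) atTop (𝓝 0) := by
  have summand (i : ℕ) : Tendsto (fun x : ℝ ↦ exp (-x) * (x ^ i / i !)) atTop (𝓝 0) := by
    simpa [mul_comm, mul_div_right_comm] using
      (tendsto_pow_mul_exp_neg_atTop_nhds_zero i).div_const (i ! : ℝ)
  unfold poissonTail
  simpa using tendsto_finsetSum (Finset.range k) fun i _ ↦ summand i

@[fun_prop]
theorem continuous_poissonTail (k : ℕ) : Continuous (poissonTail k) := by
  unfold poissonTail
  fun_prop

/-- The negative binomial mass at `i`, in closed form: the probability that a Poisson variable of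
mean `a * T` takes the value `i` when `T` has law `Gamma(s, r)`. -/
noncomputable def gammaPoissonPMF (s r a : ℝ) (i : ℕ) : ℝ :=
  Gamma (s + i) / (Gamma s * i !) * (r / (r + a)) ^ s * (a / (r + a)) ^ i

theorem gammaPDFReal_mul_poisson {s r a t : ℝ} (hs : 0 < s) (hr : 0 ≤ r) (hra : 0 < r + a)
    (ht : 0 < t) (i : ℕ) :
    gammaPDFReal s r t * (exp (-(a * t)) * ((a * t) ^ i / i !)) =
      gammaPoissonPMF s r a i * gammaPDFReal (s + i) (r + a) t := by
  have hΓ : Gamma (s + i) ≠ 0 := (Gamma_pos_of_pos (by positivity)).ne'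
  have hpow : t ^ (s + i - 1) = t ^ (s - 1) * t ^ i := by
    rw [← rpow_add_natCast ht.ne', sub_add_eq_add_sub]
  have hexp : exp (-((r + a) * t)) = exp (-(r * t)) * exp (-(a * t)) := by
    rw [← exp_add]
    ring_nf
  rw [gammaPDFReal_of_nonneg _ _ ht.le, gammaPDFReal_of_nonneg _ _ ht.le, gammaPoissonPMF, hpow,
    hexp, rpow_add_natCast hra.ne', div_rpow hr hra.le, div_pow, mul_pow]
  field_simp

theorem gammaPDFReal_mul_poissonTail {s r a t : ℝ} (hs : 0 < s) (hr : 0 ≤ r) (hra : 0 < r + a)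
    (ht : 0 < t) (k : ℕ) :
    gammaPDFReal s r t * poissonTail k (a * t) =
      ∑ i ∈ Finset.range k, gammaPoissonPMF s r a i * gammaPDFReal (s + i) (r + a) t := by
  rw [poissonTail, Finset.mul_sum]
  exact Finset.sum_congr rfl fun i _ ↦ gammaPDFReal_mul_poisson hs hr hra ht i

theorem integrableOn_gammaPDFReal_mul_poissonTail {s r a : ℝ} (hs : 0 < s) (hr : 0 ≤ r)
    (hra : 0 < r + a) (k : ℕ) :
    IntegrableOn (fun t ↦ gammaPDFReal s r t * poissonTail k (a * t)) (Ioi 0) := by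
  refine IntegrableOn.congr_fun (integrable_finsetSum _ fun i _ ↦ ?_)
    (fun t ht ↦ (gammaPDFReal_mul_poissonTail hs hr hra ht k).symm) measurableSet_Ioi
  exact (integrableOn_Ioi_gammaPDFReal (by positivity) hra).const_mul _

theorem integral_gammaPDFReal_mul_poissonTail {s r a : ℝ} (hs : 0 < s) (hr : 0 ≤ r)
    (hra : 0 < r + a) (k : ℕ) :
    ∫ t in Ioi 0, gammaPDFReal s r t * poissonTail k (a * t) =
      ∑ i ∈ Finset.range k, gammaPoissonPMF s r a i := by
  have hpos (i : ℕ) : 0 < s + i := by positivity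
  rw [setIntegral_congr_fun measurableSet_Ioi fun t ht ↦
      gammaPDFReal_mul_poissonTail hs hr hra ht k,
    integral_finsetSum _ fun i _ ↦ (integrableOn_Ioi_gammaPDFReal (hpos i) hra).const_mul _]
  simp_rw [integral_const_mul, setIntegral_Ioi_gammaPDFReal (hpos _) hra, mul_one]

theorem gammaPoissonPMF_mul_mul {c : ℝ} (hc : c ≠ 0) (s r a : ℝ) (i : ℕ) :
    gammaPoissonPMF s (c * r) (c * a) i = gammaPoissonPMF s r a i := by
  simp only [gammaPoissonPMF, ← mul_add, mul_div_mul_left _ _ hc]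

theorem two_pow_mul_doubleFactorial (i : ℕ) :
    2 ^ i * (2 * i - 1)‼ = i.centralBinom * i ! := by
  refine Nat.eq_of_mul_eq_mul_right i.factorial_pos ?_
  calc 2 ^ i * (2 * i - 1)‼ * i ! = (2 * i)‼ * (2 * i - 1)‼ := by
        rw [Nat.doubleFactorial_two_mul]
        ring
    _ = (2 * i)! := by
        cases i with
        | zero => rfl
        | succ n => exact (Nat.factorial_eq_mul_doubleFactorial _).symm
    _ = i.centralBinom * i ! * i ! := by
        simpa [Nat.centralBinom, two_mul] using
          (Nat.add_choose_mul_factorial_mul_factorial i i).symm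

theorem Gamma_natCast_add_one_half (i : ℕ) :
    Gamma (i + 1 / 2) = i.centralBinom * i ! / 4 ^ i * √π := by
  have odd_part : (2 : ℝ) ^ i * (2 * i - 1)‼ = i.centralBinom * i ! :=
    mod_cast two_pow_mul_doubleFactorial i
  rw [Gamma_nat_add_half, ← odd_part, show (4 : ℝ) = 2 * 2 by norm_num, mul_pow]
  field_simp

theorem gammaPoissonPMF_one_half {r a : ℝ} (hr : r ≠ 0) (hra : r + a ≠ 0) (i : ℕ) :
    gammaPoissonPMF (1 / 2) r a i =
      (2 * i).choose i * (a / (4 * r)) ^ i * (r / (r + a)) ^ ((i : ℝ) + 1 / 2) := by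
  have ratio : a / (r + a) = 4 * (a / (4 * r)) * (r / (r + a)) := by field_simp
  rw [gammaPoissonPMF, add_comm (1 / 2 : ℝ), Gamma_natCast_add_one_half, Gamma_one_half_eq, ratio,
    add_comm (i : ℝ), rpow_add_natCast (div_ne_zero hr hra), Nat.centralBinom, mul_pow, mul_pow]
  field_simp

theorem integrableOn_gaussQ_sqrt_mul_gammaPDFReal {s r : ℝ} (hs : 0 < s) (hr : 0 < r) (ξ : ℝ) :
    IntegrableOn (fun t ↦ gaussQ (√(2 * t * ξ)) * gammaPDFReal s r t) (Ioi 0) :=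
  (integrableOn_Ioi_gammaPDFReal hs hr).bdd_mul (c := 1) (by fun_prop)
    (.of_forall fun _ ↦ abs_gaussQ_le_one _)

theorem integral_gaussQ_sqrt_mul_gammaPDFReal {k : ℕ} (hk : k ≠ 0) {a ξ : ℝ} (ha : 0 < a)
    (hξ : 0 < ξ) :
    ∫ t in Ioi 0, gaussQ (√(2 * t * ξ)) * gammaPDFReal k a t =
      1 / 2 - 1 / 2 * ∑ i ∈ Finset.range k, gammaPoissonPMF (1 / 2) ξ a i := by
  have hk' : (0 : ℝ) < k := by positivity
  have hξa : 0 < ξ + a := by positivity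
  have at_zero : Tendsto (fun t ↦ gaussQ (√(2 * t * ξ)) * poissonTail k (a * t)) (𝓝[>] 0)
      (𝓝 (1 / 2)) := by
    refine (Continuous.tendsto' ?_ 0 (1 / 2) ?_).mono_left nhdsWithin_le_nhds
    · fun_prop
    · simp [gaussQ_zero, poissonTail_zero_right hk]
  have at_top : Tendsto (fun t ↦ gaussQ (√(2 * t * ξ)) * poissonTail k (a * t)) atTop (𝓝 0) :=
    bdd_le_mul_tendsto_zero' 1 (.of_forall fun _ ↦ abs_gaussQ_le_one _)
      ((tendsto_poissonTail_atTop k).comp (tendsto_id.const_mul_atTop ha))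
  have by_parts := integral_Ioi_mul_deriv_eq_deriv_mul
    (fun t ht ↦ hasDerivAt_gaussQ_sqrt hξ ht)
    (fun t ht ↦ hasDerivAt_poissonTail_const_mul hk a (le_of_lt ht))
    (by simpa [Pi.mul_def] using (integrableOn_gaussQ_sqrt_mul_gammaPDFReal hk' ha ξ).neg)
    (by simpa [Pi.mul_def, mul_assoc, IntegrableOn] using
      ((integrableOn_gammaPDFReal_mul_poissonTail one_half_pos hξ.le hξa k).const_mul (1 / 2)).neg)
    at_zero at_top
  simp only [mul_neg, neg_mul, mul_assoc (1 / 2 : ℝ), integral_neg, integral_const_mul] at by_parts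
  rw [integral_gammaPDFReal_mul_poissonTail one_half_pos hξ.le hξa k] at by_parts
  linarith

theorem integral_gaussQ_sqrt_mul_gammaPDFReal_eq_sum_choose {k : ℕ} (hk : k ≠ 0) {a D γ : ℝ}
    (ha : 0 < a) (hD : 0 < D) (hγ : 0 < γ) :
    ∫ t in Ioi 0, gaussQ (√(2 * t * (a * D / γ))) * gammaPDFReal k a t =
      1 / 2 - 1 / 2 * ∑ i ∈ Finset.range k,
        ((2 * i).choose i : ℝ) * (γ / (4 * D)) ^ i * (D / (D + γ)) ^ ((i : ℝ) + 1 / 2) := by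
  have weight (i : ℕ) : gammaPoissonPMF (1 / 2) (a * D / γ) a i =
      (2 * i).choose i * (γ / (4 * D)) ^ i * (D / (D + γ)) ^ ((i : ℝ) + 1 / 2) := by
    rw [← gammaPoissonPMF_one_half hD.ne' (by positivity),
      ← gammaPoissonPMF_mul_mul (div_ne_zero ha.ne' hγ.ne') _ D, div_mul_cancel₀ _ hγ.ne',
      div_mul_eq_mul_div]
  rw [integral_gaussQ_sqrt_mul_gammaPDFReal hk ha (by positivity)]
  simp_rw [weight]

theorem BER_nonstationary_interference_general {L : ℕ} (hL : L ≠ 0) {a D₁ D₂ γ₁ γ₂ : ℝ}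
    (ha : 0 < a) (hD₁ : 0 < D₁) (hD₂ : 0 < D₂) (hγ₁ : 0 < γ₁) (hγ₂ : 0 < γ₂) (R : ℝ) :
    ∫ t in Ioi 0,
        (R * gaussQ (√(2 * t * (a * D₂ / γ₂))) + (1 - R) * gaussQ (√(2 * t * (a * D₁ / γ₁)))) *
          (a ^ L / (L - 1)!) * t ^ (L - 1) * exp (-a * t) =
      1 / 2 - 1 / 2 *
        (R * ∑ i ∈ Finset.range L, ((2 * i).choose i : ℝ) * (γ₂ / (4 * D₂)) ^ i *
            (D₂ / (D₂ + γ₂)) ^ ((i : ℝ) + 1 / 2) +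
          (1 - R) * ∑ i ∈ Finset.range L, ((2 * i).choose i : ℝ) * (γ₁ / (4 * D₁)) ^ i *
            (D₁ / (D₁ + γ₁)) ^ ((i : ℝ) + 1 / 2)) := by
  have hL' : (0 : ℝ) < L := by positivity
  have integrable (ξ : ℝ) := integrableOn_gaussQ_sqrt_mul_gammaPDFReal hL' ha ξ
  calc
    _ = ∫ t in Ioi 0, (R * (gaussQ (√(2 * t * (a * D₂ / γ₂))) * gammaPDFReal L a t) +
          (1 - R) * (gaussQ (√(2 * t * (a * D₁ / γ₁))) * gammaPDFReal L a t)) := by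
      refine setIntegral_congr_fun measurableSet_Ioi fun t ht ↦ ?_
      simp only [gammaPDFReal_natCast hL a (le_of_lt ht), neg_mul]
      ring
    _ = _ := by
      rw [integral_add ((integrable _).const_mul R) ((integrable _).const_mul (1 - R)),
        integral_const_mul, integral_const_mul,
        integral_gaussQ_sqrt_mul_gammaPDFReal_eq_sum_choose hL ha hD₂ hγ₂,
        integral_gaussQ_sqrt_mul_gammaPDFReal_eq_sum_choose hL ha hD₁ hγ₁]
      ring

end

/-- With `γ_n = Lλ P_n/P_s`, `γ_i = NLλ P_i/P_s`, `γ_m = γ_i + γ_n N_d²`, `R = N_d/(Nλ)`,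
`ξ₁ = L N_d/γ_n`, `ξ₂ = L N_d³/γ_m`, the expectation of
`R·Q(√(2tξ₂)) + (1−R)·Q(√(2tξ₁))` under the Gamma density `(L^L/(L−1)!) t^{L−1} e^{−Lt}`
equals `1/2 − (1/2)[R·Ψ₂ + (1−R)·Ψ₁]`, where
`Ψ₁ = Σ_{i<L} C(2i,i)(γ_n/(4N_d))^i (N_d/(N_d+γ_n))^{i+1/2}` and
`Ψ₂ = Σ_{i<L} C(2i,i)(γ_m/(4N_d³))^i (N_d³/(N_d³+γ_m))^{i+1/2}`. -/
theorem BER_nonstationary_interference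
    (L N : ℕ) (hL : 0 < L) (hN : 0 < N)
    (Ps Pn Pi Nd lam : ℝ)
    (hPs : 0 < Ps) (hPn : 0 < Pn) (hPi : 0 < Pi) (hNd : 0 < Nd) (hlam : 0 < lam)
    (hNdle : Nd ≤ (N : ℝ) * lam)
    (γn γi γm R ξ₁ ξ₂ : ℝ)
    (hγn : γn = (L : ℝ) * lam * Pn / Ps)
    (hγi : γi = (N : ℝ) * (L : ℝ) * lam * Pi / Ps)
    (hγm : γm = γi + γn * Nd ^ 2)
    (hR : R = Nd / ((N : ℝ) * lam))
    (hξ₁ : ξ₁ = (L : ℝ) * Nd / γn)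
    (hξ₂ : ξ₂ = (L : ℝ) * Nd ^ 3 / γm) :
    ∫ t in Set.Ioi (0 : ℝ),
        (R * gaussQ (Real.sqrt (2 * t * ξ₂)) + (1 - R) * gaussQ (Real.sqrt (2 * t * ξ₁))) *
          ((L : ℝ) ^ L / (Nat.factorial (L - 1) : ℝ)) * t ^ (L - 1) *
          Real.exp (-(L : ℝ) * t)
      = 1 / 2 - 1 / 2 *
          (R * ∑ i ∈ Finset.range L, (Nat.choose (2 * i) i : ℝ) * (γm / (4 * Nd ^ 3)) ^ i *
              (Nd ^ 3 / (Nd ^ 3 + γm)) ^ ((i : ℝ) + 1 / 2) +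
            (1 - R) * ∑ i ∈ Finset.range L, (Nat.choose (2 * i) i : ℝ) * (γn / (4 * Nd)) ^ i *
              (Nd / (Nd + γn)) ^ ((i : ℝ) + 1 / 2)) := by
  have hγn_pos : 0 < γn := by rw [hγn]; positivity
  have hγm_pos : 0 < γm := by rw [hγm, hγi]; positivity
  rw [hξ₁, hξ₂]
  exact BER_nonstationary_interference_general hL.ne' (Nat.cast_pos.2 hL) hNd (pow_pos hNd 3)
    hγn_pos hγm_pos R
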